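/- Let G = (U, V, E) be a bipartite graph with finite vertex sets, let α, β be positive integers, and let M₁ and M₂ be maximal bicliques of G. Then M₁ and M₂ are (α,β)-connected if and only if there is a finite sequence of maximal bicliques M₁ = N₁, N₂, …, Nₖ = M₂ such that Nᵢ and Nᵢ₊₁ are (α,β)-adjacent for every i = 1, …, k−1. (That is, connectivity witnessed by chains of arbitrary bicliques can always be witnessed by chains of maximal bicliques.) -/

import Mathlib

variable {U V : Type*} [DecidableEq U] [DecidableEq V]

/-- `(X, Y)` is a biclique of the bipartite graph with parts `U`, `V` and
edge relation `E`: every vertex of `X` is joined to every vertex of `Y`. -/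
def IsBiclique (E : U → V → Prop) (X : Finset U) (Y : Finset V) : Prop :=
  ∀ u ∈ X, ∀ v ∈ Y, E u v

/-- `(X, Y)` is a maximal biclique: it is a biclique and it is not strictly
contained in any other biclique. -/
def IsMaxBiclique (E : U → V → Prop) (X : Finset U) (Y : Finset V) : Prop :=
  IsBiclique E X Y ∧
    ∀ X' : Finset U, ∀ Y' : Finset V,
      IsBiclique E X' Y' → X ⊆ X' → Y ⊆ Y' → X = X' ∧ Y = Y'

/-- Two bicliques (given as pairs) are `(α,β)`-adjacent if they share at least
`α` vertices on the `U` side and at least `β` vertices on the `V` side. -/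
def BAdj (α β : ℕ) (B₁ B₂ : Finset U × Finset V) : Prop :=
  α ≤ (B₁.1 ∩ B₂.1).card ∧ β ≤ (B₁.2 ∩ B₂.2).card

/-- Two bicliques `B`, `B'` are `(α,β)`-connected if there is a finite sequence
of bicliques `B = B₁, B₂, …, Bₙ = B'` (with `n ≥ 2`) in which consecutive
bicliques are `(α,β)`-adjacent. -/
def BConnected (E : U → V → Prop) (α β : ℕ) (B B' : Finset U × Finset V) : Prop :=
  ∃ (n : ℕ) (c : ℕ → Finset U × Finset V),
    2 ≤ n ∧ c 0 = B ∧ c (n - 1) = B' ∧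
    (∀ i < n, IsBiclique E (c i).1 (c i).2) ∧
    (∀ i, i + 1 < n → BAdj α β (c i) (c (i + 1)))

/-- An `(α,β)`-biclique percolation community: a set `C` of maximal bicliques
such that any two (distinct) members are `(α,β)`-connected, and `C` is maximal
with this property. -/
def IsBCPC (E : U → V → Prop) (α β : ℕ) (C : Set (Finset U × Finset V)) : Prop :=
  (∀ B ∈ C, IsMaxBiclique E B.1 B.2) ∧
  (∀ B₁ ∈ C, ∀ B₂ ∈ C, B₁ ≠ B₂ → BConnected E α β B₁ B₂) ∧
  ∀ C' : Set (Finset U × Finset V),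
    (∀ B ∈ C', IsMaxBiclique E B.1 B.2) →
    (∀ B₁ ∈ C', ∀ B₂ ∈ C', B₁ ≠ B₂ → BConnected E α β B₁ B₂) →
    C ⊆ C' → C = C'

/-- Every biclique of a finite bipartite graph extends to a maximal one. -/
theorem exists_max_ext {U V : Type*} [Fintype U] [Fintype V] (E : U → V → Prop)
    (B : Finset U × Finset V) :
    ∃ M : Finset U × Finset V, IsBiclique E B.1 B.2 →
      IsMaxBiclique E M.1 M.2 ∧ B.1 ⊆ M.1 ∧ B.2 ⊆ M.2 := by
  by_cases hB : IsBiclique E B.1 B.2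
  · obtain ⟨M, hle, hM⟩ := Set.Finite.exists_le_maximal
      (Set.toFinite {M : Finset U × Finset V | IsBiclique E M.1 M.2}) hB
    refine ⟨M, fun _ => ⟨⟨hM.1, fun X' Y' h hX hY => ?_⟩, hle.1, hle.2⟩⟩
    have := hM.2 (y := (X', Y')) h ⟨hX, hY⟩
    exact ⟨hX.antisymm this.1, hY.antisymm this.2⟩
  · exact ⟨B, fun h => absurd h hB⟩

theorem stmt10 [Fintype U] [Fintype V] (E : U → V → Prop) (α β : ℕ)
    (hα : 0 < α) (hβ : 0 < β) (M₁ M₂ : Finset U × Finset V)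
    (h₁ : IsMaxBiclique E M₁.1 M₁.2) (h₂ : IsMaxBiclique E M₂.1 M₂.2) :
    BConnected E α β M₁ M₂ ↔
      ∃ (k : ℕ) (c : ℕ → Finset U × Finset V),
        2 ≤ k ∧ c 0 = M₁ ∧ c (k - 1) = M₂ ∧
        (∀ i < k, IsMaxBiclique E (c i).1 (c i).2) ∧
        (∀ i, i + 1 < k → BAdj α β (c i) (c (i + 1))) := by
  constructor
  · rintro ⟨n, c, hn, h0, hl, hb, ha⟩
    choose f hf using exists_max_ext (U := U) (V := V) E
    have hfix : ∀ M : Finset U × Finset V, IsMaxBiclique E M.1 M.2 → f M = M := by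
      intro M hM
      obtain ⟨hm, h1, h2⟩ := hf M hM.1
      obtain ⟨e1, e2⟩ := hM.2 _ _ hm.1 h1 h2
      exact Prod.ext e1.symm e2.symm
    refine ⟨n, fun i => f (c i), hn, ?_, ?_, ?_, ?_⟩
    · simp only [h0, hfix _ h₁]
    · simp only [hl, hfix _ h₂]
    · intro i hi
      exact (hf _ (hb i hi)).1
    · intro i hi
      obtain ⟨-, a1, a2⟩ := hf _ (hb i (by omega))
      obtain ⟨-, b1, b2⟩ := hf _ (hb (i + 1) hi)
      obtain ⟨p, q⟩ := ha i hi
      exact ⟨p.trans (Finset.card_le_card (Finset.inter_subset_inter a1 b1)),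
        q.trans (Finset.card_le_card (Finset.inter_subset_inter a2 b2))⟩
  · rintro ⟨n, c, hn, h0, hl, hb, ha⟩
    exact ⟨n, c, hn, h0, hl, fun i hi => (hb i hi).1, ha⟩
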